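/- Let c*(t,w) satisfy c*(t,0) = 0 with c*(t,·) locally Lipschitz and strictly increasing in w, let w(t,x) solve ∂_t w(t,x) = −c*(t,w(t,x)), w(0,x) = x, assume x ↦ c*(t,w(t,x)) is twice differentiable with strictly positive first derivative, let D : (0,∞) → (0,∞) be differentiable with ∫_x^∞ D(ξ) dξ < ∞ for all x > 0, and let u satisfy ∂_c u(t, c*(t,w(t,x))) = ∫_x^∞ D(ξ) dξ. Then the investor is IARA, i.e. ∂_c ρ(t,c) ≥ 0 for all t ≥ 0 and all c in the range of c*(t,w(t,·)), if and only if for every x > 0: D'(x)/D(x) + D(x)/∫_x^∞ D(ξ) dξ ≥ sup_{t ≥ 0} (∂²_x c*(t,w(t,x))) / (∂_x c*(t,w(t,x))). -/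

import Mathlib

open MeasureTheory Set

/-!
Write `g t x = cstar t (w t x)` and `I x = ∫ ξ in Ioi x, D ξ`. Differentiating `du t (g t x) = I x`
gives `d2u t (g t x) = -D x / dc t x`, so that the risk aversion at `g t x` is `D x / (dc t x * I x)`.
Differentiating once more in `x`,
`drho t (g t x) * dc t x = D x / (dc t x * I x) * (D' x / D x + D x / I x - d2c t x / dc t x)`,
and the equivalence is a comparison of signs.

The chain rule is available only at `g t x > 0`, so the wealth paths have to stay positive. As the
local Lipschitz constant of `cstar t` may depend on `t` without any bound, uniqueness for the ODE
cannot be invoked. Instead: `g t` is strictly increasing, so paths never meet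
(`wealth_strictMono`) and the distance between two of them decreases in time, which makes `w t`
continuous (`wealth_continuousOn`). If a path is negative while a higher one is nonnegative, some
path in between sits at zero and consumes nothing, so the negative path has negative consumption and
is moving up (`consumption_neg`). Hence no path can ever become negative (`wealth_nonneg`).
-/

section Wealth

variable {cstar w dc : ℝ → ℝ → ℝ}

lemma consumption_strictMono
    (hdc : ∀ t ≥ (0:ℝ), ∀ x > (0:ℝ), HasDerivAt (fun z => cstar t (w t z)) (dc t x) x)
    (hdcpos : ∀ t ≥ (0:ℝ), ∀ x > (0:ℝ), 0 < dc t x) {t : ℝ} (ht : 0 ≤ t) :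
    StrictMonoOn (fun z => cstar t (w t z)) (Ioi 0) := by
  refine strictMonoOn_of_deriv_pos (convex_Ioi 0)
    (fun x hx => (hdc t ht x hx).continuousAt.continuousWithinAt) ?_
  intro x hx
  rw [interior_Ioi] at hx
  rw [(hdc t ht x hx).deriv]
  exact hdcpos t ht x hx

/-- Paths that meet would consume the same amount, contrary to strict monotonicity of consumption in
the initial wealth; by continuity in time they keep their initial order. -/
lemma wealth_strictMono
    (hw0 : ∀ x ≥ (0:ℝ), w 0 x = x)
    (hwode : ∀ x ≥ (0:ℝ), ∀ t ≥ (0:ℝ),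
      HasDerivAt (fun s => w s x) (-(cstar t (w t x))) t)
    (hg : ∀ t ≥ (0:ℝ), StrictMonoOn (fun z => cstar t (w t z)) (Ioi 0))
    {t x y : ℝ} (ht : 0 ≤ t) (hx : 0 < x) (hxy : x < y) : w t x < w t y := by
  by_contra! h
  have hy : 0 < y := hx.trans hxy
  have hcont : ContinuousOn (fun s => w s y - w s x) (Icc 0 t) := fun s hs =>
    ((hwode y hy.le s hs.1).sub (hwode x hx.le s hs.1)).continuousAt.continuousWithinAt
  obtain ⟨s, hs, hs0⟩ := intermediate_value_Icc' ht hcont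
    (show (0:ℝ) ∈ Icc _ _ from ⟨by simpa using h, by simp [hw0 x hx.le, hw0 y hy.le, hxy.le]⟩)
  have h1 : cstar s (w s x) < cstar s (w s y) := hg s hs.1 hx hy hxy
  have h2 : w s y = w s x := sub_eq_zero.mp hs0
  rw [h2] at h1
  exact lt_irrefl _ h1

/-- Higher paths consume more, so distances between paths shrink and `w t` is `1`-Lipschitz. -/
lemma wealth_continuousOn
    (hw0 : ∀ x ≥ (0:ℝ), w 0 x = x)
    (hwode : ∀ x ≥ (0:ℝ), ∀ t ≥ (0:ℝ),
      HasDerivAt (fun s => w s x) (-(cstar t (w t x))) t)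
    (hg : ∀ t ≥ (0:ℝ), StrictMonoOn (fun z => cstar t (w t z)) (Ioi 0))
    {t : ℝ} (ht : 0 ≤ t) : ContinuousOn (w t) (Ioi 0) := by
  have key : ∀ x > 0, ∀ y > x, w t y - w t x ≤ y - x := by
    intro x hx y hxy
    have hy : 0 < y := lt_trans hx hxy
    have hd : ∀ s ≥ (0:ℝ), HasDerivAt (fun s => w s y - w s x) _ s := fun s hs =>
      (hwode y hy.le s hs).sub (hwode x hx.le s hs)
    have hanti : AntitoneOn (fun s => w s y - w s x) (Ici 0) := by
      refine antitoneOn_of_deriv_nonpos (convex_Ici 0)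
        (fun s hs => (hd s hs).continuousAt.continuousWithinAt) ?_ ?_
      · intro s hs
        rw [interior_Ici] at hs
        exact (hd s hs.le).differentiableAt.differentiableWithinAt
      · intro s hs
        rw [interior_Ici] at hs
        rw [(hd s hs.le).deriv]
        have h1 : cstar s (w s x) < cstar s (w s y) := hg s hs.le hx hy hxy
        linarith
    have h2 := hanti (show (0:ℝ) ∈ Ici 0 from self_mem_Ici) (show t ∈ Ici 0 from ht) ht
    simpa [hw0 x hx.le, hw0 y hy.le] using h2
  have hlip : LipschitzOnWith 1 (w t) (Ioi 0) := by
    refine LipschitzOnWith.of_le_add fun y hy x hx => ?_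
    rcases lt_trichotomy x y with h | h | h
    · have := key x hx y h
      rw [Real.dist_eq, abs_of_pos (sub_pos.2 h)]
      linarith
    · simp [h]
    · have := wealth_strictMono hw0 hwode hg ht hy h
      have := dist_nonneg (x := y) (y := x)
      linarith
  exact hlip.continuousOn

lemma consumption_neg
    (hc0 : ∀ t ≥ (0:ℝ), cstar t 0 = 0)
    (hw0 : ∀ x ≥ (0:ℝ), w 0 x = x)
    (hwode : ∀ x ≥ (0:ℝ), ∀ t ≥ (0:ℝ),
      HasDerivAt (fun s => w s x) (-(cstar t (w t x))) t)
    (hg : ∀ t ≥ (0:ℝ), StrictMonoOn (fun z => cstar t (w t z)) (Ioi 0))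
    {t z y : ℝ} (ht : 0 ≤ t) (hz : 0 < z) (hzy : z < y) (hwz : w t z < 0) (hwy : 0 ≤ w t y) :
    cstar t (w t z) < 0 := by
  have hcont : ContinuousOn (w t) (Icc z y) :=
    (wealth_continuousOn hw0 hwode hg ht).mono fun v hv => lt_of_lt_of_le hz hv.1
  obtain ⟨v, hv, hv0⟩ := intermediate_value_Icc hzy.le hcont ⟨hwz.le, hwy⟩
  have hzv : z < v := by
    refine lt_of_le_of_ne hv.1 ?_
    rintro rfl
    exact hwz.ne hv0
  have h : cstar t (w t z) < cstar t (w t v) := hg t ht hz (hz.trans hzv) hzv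
  rwa [hv0, hc0 t ht] at h

lemma wealth_nonneg
    (hc0 : ∀ t ≥ (0:ℝ), cstar t 0 = 0)
    (hw0 : ∀ x ≥ (0:ℝ), w 0 x = x)
    (hwode : ∀ x ≥ (0:ℝ), ∀ t ≥ (0:ℝ),
      HasDerivAt (fun s => w s x) (-(cstar t (w t x))) t)
    (hg : ∀ t ≥ (0:ℝ), StrictMonoOn (fun z => cstar t (w t z)) (Ioi 0))
    {t z : ℝ} (ht : 0 ≤ t) (hz : 0 < z) : 0 ≤ w t z := by
  by_contra! hneg
  have hcont : ContinuousOn (fun s => w s z) (Icc 0 t) := fun s hs =>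
    (hwode z hz.le s hs.1).continuousAt.continuousWithinAt
  -- `s` is the last time before `t` at which the path is nonnegative.
  obtain ⟨s, ⟨hs, hs0⟩, hmax⟩ : ∃ s, IsGreatest (Icc 0 t ∩ (fun s => w s z) ⁻¹' Ici 0) s :=
    (isCompact_Icc.of_isClosed_subset (hcont.preimage_isClosed_of_isClosed isClosed_Icc isClosed_Ici)
      inter_subset_left).exists_isGreatest ⟨0, ⟨le_refl _, ht⟩, by simp [hw0 z hz.le, hz.le]⟩
  replace hs0 : 0 ≤ w s z := hs0
  have hst : s < t := by
    refine lt_of_le_of_ne hs.2 ?_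
    rintro rfl
    exact absurd hneg (not_lt.2 hs0)
  have hafter : ∀ r, s < r → r ≤ t → w r z < 0 := by
    intro r hsr hrt
    by_contra! hr
    exact absurd (hmax ⟨⟨hs.1.trans hsr.le, hrt⟩, hr⟩) (not_le.2 hsr)
  -- A strictly higher path is still positive for a while after `s`.
  have hpos : 0 < w s (z + 1) := lt_of_le_of_lt hs0
    (wealth_strictMono hw0 hwode hg hs.1 hz (lt_add_one z))
  have hev : ∀ᶠ r in nhds s, 0 < w r (z + 1) :=
    (hwode (z + 1) (by linarith) s hs.1).continuousAt.eventually (lt_mem_nhds hpos)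
  obtain ⟨ε, hε, hball⟩ := Metric.eventually_nhds_iff.1 hev
  set r := min t (s + ε / 2) with hr
  have hsr : s < r := lt_min hst (by linarith)
  have hrt : r ≤ t := min_le_left _ _
  have hrε : r ≤ s + ε / 2 := min_le_right _ _
  have hmono : MonotoneOn (fun s => w s z) (Icc s r) := by
    refine monotoneOn_of_deriv_nonneg (convex_Icc s r)
      (hcont.mono (Icc_subset_Icc hs.1 hrt)) ?_ ?_
    · intro q hq
      rw [interior_Icc] at hq
      exact (hwode z hz.le q (hs.1.trans hq.1.le)).differentiableAt.differentiableWithinAt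
    · intro q hq
      rw [interior_Icc] at hq
      have hq0 : 0 ≤ q := hs.1.trans hq.1.le
      rw [(hwode z hz.le q hq0).deriv]
      have hwq : 0 < w q (z + 1) := hball (by
        rw [Real.dist_eq, abs_of_pos (sub_pos.2 hq.1)]
        linarith [hq.2])
      have := consumption_neg hc0 hw0 hwode hg hq0 hz (lt_add_one z)
        (hafter q hq.1 (hq.2.le.trans hrt)) hwq.le
      linarith
  have h1 : w s z ≤ w r z := hmono ⟨le_refl _, hsr.le⟩ ⟨hsr.le, le_refl _⟩ hsr.le
  linarith [hafter r hsr hrt]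

end Wealth

section Tail

variable {D : ℝ → ℝ}

lemma tail_pos (hD : ∀ x > (0:ℝ), 0 < D x) (hDint : ∀ x > (0:ℝ), IntegrableOn D (Ioi x))
    {x : ℝ} (hx : 0 < x) : 0 < ∫ ξ in Ioi x, D ξ := by
  have hsub : Ioi x ⊆ Function.support D ∩ Ioi x := fun y hy => ⟨(hD y (hx.trans hy)).ne', hy⟩
  rw [setIntegral_pos_iff_support_of_nonneg_ae _ (hDint x hx)]
  · refine lt_of_lt_of_le ?_ (measure_mono hsub)
    simp
  · exact (ae_restrict_iff' measurableSet_Ioi).2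
      (Filter.Eventually.of_forall fun y hy => (hD y (hx.trans hy)).le)

lemma tail_hasDerivAt (hDcont : ∀ x > (0:ℝ), ContinuousAt D x)
    (hDint : ∀ x > (0:ℝ), IntegrableOn D (Ioi x))
    {x : ℝ} (hx : 0 < x) : HasDerivAt (fun z => ∫ ξ in Ioi z, D ξ) (-D x) x := by
  have ha : 0 < x / 2 := by linarith
  have hcon : ContinuousOn D (Ioi 0) := fun y hy => (hDcont y hy).continuousWithinAt
  have hsm : StronglyMeasurableAtFilter D (nhds x) :=
    hcon.stronglyMeasurableAtFilter isOpen_Ioi x hx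
  have hii : IntervalIntegrable D volume (x / 2) x :=
    (hcon.mono (by
      rw [uIcc_of_le (by linarith)]
      exact fun y hy => lt_of_lt_of_le ha hy.1)).intervalIntegrable
  have h := (intervalIntegral.integral_hasDerivAt_right hii hsm (hDcont x hx)).const_sub
    (∫ ξ in Ioi (x / 2), D ξ)
  refine h.congr_of_eventuallyEq ?_
  filter_upwards [lt_mem_nhds hx] with z hz
  have := intervalIntegral.integral_Ioi_sub_Ioi' (hDint _ ha) (hDint z hz)
  linarith

end Tail

theorem stmt_7
    (cstar : ℝ → ℝ → ℝ) (w : ℝ → ℝ → ℝ) (dc d2c : ℝ → ℝ → ℝ)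
    (D D' : ℝ → ℝ) (u du d2u drho : ℝ → ℝ → ℝ)
    (hc0 : ∀ t ≥ (0:ℝ), cstar t 0 = 0)
    (hclip : ∀ t ≥ (0:ℝ), LocallyLipschitz (cstar t))
    (hcmono : ∀ t ≥ (0:ℝ), StrictMonoOn (cstar t) (Ici 0))
    (hw0 : ∀ x ≥ (0:ℝ), w 0 x = x)
    (hwode : ∀ x ≥ (0:ℝ), ∀ t ≥ (0:ℝ),
      HasDerivAt (fun s => w s x) (-(cstar t (w t x))) t)
    (hdc : ∀ t ≥ (0:ℝ), ∀ x > (0:ℝ), HasDerivAt (fun z => cstar t (w t z)) (dc t x) x)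
    (hd2c : ∀ t ≥ (0:ℝ), ∀ x > (0:ℝ), HasDerivAt (dc t) (d2c t x) x)
    (hdcpos : ∀ t ≥ (0:ℝ), ∀ x > (0:ℝ), 0 < dc t x)
    (hD : ∀ x > (0:ℝ), 0 < D x)
    (hD' : ∀ x > (0:ℝ), HasDerivAt D (D' x) x)
    (hDint : ∀ x > (0:ℝ), IntegrableOn D (Ioi x))
    (hdu : ∀ t ≥ (0:ℝ), ∀ c > (0:ℝ), HasDerivAt (u t) (du t c) c)
    (hd2u : ∀ t ≥ (0:ℝ), ∀ c > (0:ℝ), HasDerivAt (du t) (d2u t c) c)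
    (hduid : ∀ t ≥ (0:ℝ), ∀ x > (0:ℝ),
      du t (cstar t (w t x)) = ∫ ξ in Ioi x, D ξ)
    (hdrho : ∀ t ≥ (0:ℝ), ∀ c > (0:ℝ),
      HasDerivAt (fun v => -(d2u t v) / du t v) (drho t c) c) :
    (∀ t ≥ (0:ℝ), ∀ x > (0:ℝ), 0 ≤ drho t (cstar t (w t x))) ↔
      (∀ x > (0:ℝ), ∀ t ≥ (0:ℝ),
        d2c t x / dc t x ≤ D' x / D x + D x / (∫ ξ in Ioi x, D ξ)) := by
  have hg := fun t ht => consumption_strictMono (t := t) hdc hdcpos ht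
  have hgpos : ∀ t ≥ (0:ℝ), ∀ x > (0:ℝ), 0 < cstar t (w t x) := by
    intro t ht x hx
    have hwx : 0 < w t x := lt_of_le_of_lt
      (wealth_nonneg hc0 hw0 hwode hg ht (half_pos hx))
      (wealth_strictMono hw0 hwode hg ht (half_pos hx) (half_lt_self hx))
    have := hcmono t ht (show (0:ℝ) ∈ Ici 0 from self_mem_Ici) (show w t x ∈ Ici 0 from hwx.le) hwx
    rwa [hc0 t ht] at this
  have hI : ∀ x > (0:ℝ), 0 < ∫ ξ in Ioi x, D ξ := fun x hx => tail_pos hD hDint hx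
  have hI' : ∀ x > (0:ℝ), HasDerivAt (fun z => ∫ ξ in Ioi z, D ξ) (-D x) x := fun x hx =>
    tail_hasDerivAt (fun y hy => (hD' y hy).continuousAt) hDint hx
  have hd2 : ∀ t ≥ (0:ℝ), ∀ x > (0:ℝ), d2u t (cstar t (w t x)) * dc t x = -D x := by
    intro t ht x hx
    have h1 : HasDerivAt (fun z => du t (cstar t (w t z))) _ x :=
      (hd2u t ht _ (hgpos t ht x hx)).comp x (hdc t ht x hx)
    refine h1.unique ((hI' x hx).congr_of_eventuallyEq ?_)
    filter_upwards [lt_mem_nhds hx] with z hz using hduid t ht z hz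
  have key : ∀ t ≥ (0:ℝ), ∀ x > (0:ℝ), drho t (cstar t (w t x)) * dc t x =
      D x / (dc t x * ∫ ξ in Ioi x, D ξ) *
        (D' x / D x + D x / (∫ ξ in Ioi x, D ξ) - d2c t x / dc t x) := by
    intro t ht x hx
    have hp := hdcpos t ht x hx
    have hIx := hI x hx
    have hDx := hD x hx
    have h1 : HasDerivAt (fun z => -(d2u t (cstar t (w t z))) / du t (cstar t (w t z)))
        (drho t (cstar t (w t x)) * dc t x) x :=
      HasDerivAt.comp (h₂ := fun v => -(d2u t v) / du t v) x (hdrho t ht _ (hgpos t ht x hx))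
        (hdc t ht x hx)
    have h2 := (hD' x hx).div ((hd2c t ht x hx).mul (hI' x hx)) (mul_pos hp hIx).ne'
    have h3 := h1.unique (h2.congr_of_eventuallyEq (by
      filter_upwards [lt_mem_nhds hx] with z hz
      have hpz := hdcpos t ht z hz
      have hIz := hI z hz
      have e : -(d2u t (cstar t (w t z))) = D z / dc t z := by
        rw [eq_div_iff hpz.ne']
        linarith [hd2 t ht z hz]
      simp only [Pi.div_apply, Pi.mul_apply]
      rw [hduid t ht z hz, e, div_div]))
    rw [h3]
    simp only [Pi.mul_apply]
    field_simp
    ring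
  have hiff : ∀ t ≥ (0:ℝ), ∀ x > (0:ℝ), 0 ≤ drho t (cstar t (w t x)) ↔
      d2c t x / dc t x ≤ D' x / D x + D x / (∫ ξ in Ioi x, D ξ) := by
    intro t ht x hx
    rw [← mul_nonneg_iff_of_pos_right (hdcpos t ht x hx), key t ht x hx,
      mul_nonneg_iff_of_pos_left (div_pos (hD x hx) (mul_pos (hdcpos t ht x hx) (hI x hx))),
      sub_nonneg]
  exact ⟨fun h x hx t ht => (hiff t ht x hx).1 (h t ht x hx),
    fun h t ht x hx => (hiff t ht x hx).2 (h x hx t ht)⟩
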